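/- In the line network with n hops, message set of size M = 2^{NR}, per-node power constraint P_0, and per-link Gaussian noise variances σ_i² ≥ σ_0² > 0, for any choice of rate-R length-N codes at nodes 0,...,n−1 and decision rules at nodes 1,...,n, the end-to-end mutual information satisfies I(W; Ŵ_n) ≤ NR·[1 − M·Q(((M−1)/M)·Ω_0, N, P_0/σ_0²)]^n. -/

import Mathlib

open MeasureTheory ProbabilityTheory

/-- The inverse cotangent with range `(0, π)` (continuous decreasing branch). -/
noncomputable def arccot (x : ℝ) : ℝ := Real.pi / 2 - Real.arctan x

/-- `g v` is the solid angle of the right circular cone of half-angle `v` in `ℝ^N`. -/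
noncomputable def g (N : ℕ) (v : ℝ) : ℝ :=
  ((N : ℝ) - 1) * Real.pi ^ (((N : ℝ) - 1) / 2) / Real.Gamma (((N : ℝ) + 1) / 2) *
    ∫ θ in (0 : ℝ)..v, Real.sin θ ^ (N - 2)

/-- The random angle `Φ_γ` as a function of the noise vector of `N` i.i.d. standard
Gaussians. -/
noncomputable def Phi (N : ℕ) [NeZero N] (γ : ℝ) (z : Fin N → ℝ) : ℝ :=
  if 0 < ∑ l ∈ Finset.univ.erase (0 : Fin N), z l ^ 2 then
    arccot ((Real.sqrt (N * γ) + z 0) /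
      Real.sqrt (∑ l ∈ Finset.univ.erase (0 : Fin N), z l ^ 2))
  else 0

/-- Shannon's `Q(x, N, γ) = Pr[g(Φ_γ) ≥ x]`: the probability that a unit-variance
Gaussian perturbation displaces a signal point at squared norm `Nγ` outside the right
circular cone of solid angle `x` centered at the signal direction. -/
noncomputable def Qfun (x : ℝ) (N : ℕ) [NeZero N] (γ : ℝ) : ℝ :=
  ((Measure.pi fun _ : Fin N => gaussianReal 0 1) {z | x ≤ g N (Phi N γ z)}).toReal

/-- The transition matrix of one hop: node transmits codeword `enc j`, AWGN with
variance `σ2` per dimension is added, and the receiver decides via `dec`. -/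
noncomputable def hopMatrix {N M : ℕ} (enc : Fin M → Fin N → ℝ)
    (dec : (Fin N → ℝ) → Fin M) (σ2 : NNReal) : Matrix (Fin M) (Fin M) ℝ :=
  fun j k =>
    ((Measure.pi fun _ : Fin N => gaussianReal 0 σ2)
      {z | dec (fun t => enc j t + z t) = k}).toReal

/-- Shannon mutual information between an input with distribution `p` and the output of
the channel with transition matrix `Q` (convention `Real.log 0 = 0`). -/
noncomputable def mutualInfo {M : ℕ} (p : Fin M → ℝ) (Q : Matrix (Fin M) (Fin M) ℝ) : ℝ :=
  ∑ j, ∑ k, p j * Q j k * Real.log (Q j k / ∑ j', p j' * Q j' k)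


lemma aux_log_sum {ι : Type*} (s : Finset ι) (a b : ι → ℝ) (ha : ∀ i ∈ s, 0 ≤ a i)
    (hb : ∀ i ∈ s, 0 ≤ b i) (hab : ∀ i ∈ s, b i = 0 → a i = 0) :
    (∑ i ∈ s, a i) * Real.log ((∑ i ∈ s, a i) / ∑ i ∈ s, b i) ≤
      ∑ i ∈ s, a i * Real.log (a i / b i) := by
  set A := ∑ i ∈ s, a i with hA
  set B := ∑ i ∈ s, b i with hB
  have hA0 : 0 ≤ A := Finset.sum_nonneg ha
  rcases hA0.eq_or_lt with h0 | hApos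
  · have : ∀ i ∈ s, a i = 0 := (Finset.sum_eq_zero_iff_of_nonneg ha).1 h0.symm
    rw [← h0, Finset.sum_eq_zero]
    · simp
    · intro i hi; rw [this i hi]; simp
  have hBpos : 0 < B := by
    rcases (Finset.sum_nonneg hb).eq_or_lt with h | h
    · exfalso
      have h1 : ∀ i ∈ s, b i = 0 := (Finset.sum_eq_zero_iff_of_nonneg hb).1 h.symm
      have : A = 0 := Finset.sum_eq_zero fun i hi => hab i hi (h1 i hi)
      linarith
    · exact h
  have key : ∀ i ∈ s, a i * Real.log (A / B) + (a i - b i * (A / B)) ≤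
      a i * Real.log (a i / b i) := by
    intro i hi
    rcases (ha i hi).eq_or_lt with h | h
    · rw [← h]
      have : 0 ≤ b i * (A / B) := mul_nonneg (hb i hi) (by positivity)
      simp; linarith
    · have hbi : 0 < b i := by
        rcases (hb i hi).eq_or_lt with h' | h'
        · have := hab i hi h'.symm; linarith
        · exact h'
      have hx : 0 < (a i / b i) / (A / B) := by positivity
      have := Real.one_sub_inv_le_log_of_pos hx
      rw [Real.log_div (by positivity) (by positivity)] at this
      have h2 := mul_le_mul_of_nonneg_left this h.le
      have h3 : a i * (1 - (a i / b i / (A / B))⁻¹) = a i - b i * (A / B) := by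
        field_simp
      rw [h3] at h2
      linarith
  have := Finset.sum_le_sum key
  rw [Finset.sum_add_distrib, ← Finset.sum_mul, Finset.sum_sub_distrib, ← Finset.sum_mul,
    ← hA, ← hB] at this
  have h4 : B * (A / B) = A := by field_simp
  rw [h4] at this
  linarith

def IsStoch {M : ℕ} (A : Matrix (Fin M) (Fin M) ℝ) : Prop :=
  (∀ j k, 0 ≤ A j k) ∧ ∀ j, ∑ k, A j k = 1

lemma aux_stoch_mul {M : ℕ} {A B : Matrix (Fin M) (Fin M) ℝ} (hA : IsStoch A) (hB : IsStoch B) :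
    IsStoch (A * B) := by
  refine ⟨fun j k => ?_, fun j => ?_⟩
  · rw [Matrix.mul_apply]
    exact Finset.sum_nonneg fun l _ => mul_nonneg (hA.1 _ _) (hB.1 _ _)
  · simp_rw [Matrix.mul_apply]
    rw [Finset.sum_comm]
    simp_rw [← Finset.mul_sum, hB.2, mul_one, hA.2]

lemma aux_mi_nonneg {M : ℕ} (p : Fin M → ℝ) (hp0 : ∀ j, 0 ≤ p j) (hp1 : ∑ j, p j = 1)
    {P : Matrix (Fin M) (Fin M) ℝ} (hP : IsStoch P) : 0 ≤ mutualInfo p P := by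
  unfold mutualInfo
  refine Finset.sum_nonneg fun j _ => ?_
  rcases (hp0 j).eq_or_lt with h | h
  · simp [← h]
  simp_rw [mul_assoc, ← Finset.mul_sum]
  refine mul_nonneg h.le ?_
  have := aux_log_sum Finset.univ (P j) (fun k => ∑ j', p j' * P j' k) (fun k _ => hP.1 _ _)
    (fun k _ => Finset.sum_nonneg fun l _ => mul_nonneg (hp0 _) (hP.1 _ _)) (by
      intro k _ hk
      have := (Finset.sum_eq_zero_iff_of_nonneg
        (fun l _ => mul_nonneg (hp0 l) (hP.1 l k))).1 hk j (Finset.mem_univ _)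
      rcases mul_eq_zero.1 this with h' | h'
      · linarith
      · exact h')
  rw [hP.2, Finset.sum_comm] at this
  simp_rw [← Finset.mul_sum, hP.2, mul_one, hp1] at this
  simpa using this

lemma aux_mi_contract {M : ℕ} [NeZero M] (p : Fin M → ℝ) (hp0 : ∀ j, 0 ≤ p j)
    (hp1 : ∑ j, p j = 1)
    {P A : Matrix (Fin M) (Fin M) ℝ} (hP : IsStoch P) (hA : IsStoch A) (δ : ℝ)
    (hδ : ∀ f : Fin M → Fin M, δ ≤ ∑ k, A (f k) k) :
    mutualInfo p (P * A) ≤ (1 - δ) * mutualInfo p P := by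
  have hmin : ∀ k, ∃ j, ∀ j', A j k ≤ A j' k := fun k => by
    obtain ⟨j, _, hj⟩ := Finset.exists_min_image Finset.univ (fun j => A j k)
      ⟨0, Finset.mem_univ _⟩
    exact ⟨j, fun j' => hj j' (Finset.mem_univ _)⟩
  choose f hf using hmin
  set δ' := ∑ k, A (f k) k with hδ'
  have hle : δ ≤ δ' := hδ f
  refine le_trans ?_ (mul_le_mul_of_nonneg_right (by linarith : 1 - δ' ≤ 1 - δ)
    (aux_mi_nonneg p hp0 hp1 hP))
  set q : Fin M → ℝ := fun k => ∑ j', p j' * P j' k with hq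
  have hq0 : ∀ k, 0 ≤ q k := fun k => Finset.sum_nonneg fun l _ => mul_nonneg (hp0 _) (hP.1 _ _)
  have hq1 : ∑ k, q k = 1 := by
    rw [hq, Finset.sum_comm]
    simp_rw [← Finset.mul_sum, hP.2, mul_one, hp1]
  set B : Fin M → Fin M → ℝ := fun l k => A l k - A (f k) k with hB
  have hB0 : ∀ l k, 0 ≤ B l k := fun l k => by have := hf k l; simp only [hB]; linarith
  have hB1 : ∀ l, ∑ k, B l k = 1 - δ' := fun l => by
    simp only [hB, Finset.sum_sub_distrib, hA.2, hδ']
  have hqA : ∀ k, ∑ j', p j' * (P * A) j' k = A (f k) k + ∑ l, q l * B l k := by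
    intro k
    have h1 : ∑ j', p j' * (P * A) j' k = ∑ l, q l * A l k := by
      simp_rw [Matrix.mul_apply, hq, Finset.mul_sum, Finset.sum_mul]
      rw [Finset.sum_comm]
      simp_rw [mul_assoc]
    rw [h1]
    simp only [hB, mul_sub, Finset.sum_sub_distrib]
    rw [← Finset.sum_mul, hq1]; ring
  have hPA : ∀ j k, (P * A) j k = A (f k) k + ∑ l, P j l * B l k := by
    intro j k
    rw [Matrix.mul_apply]
    simp only [hB, mul_sub, Finset.sum_sub_distrib]
    rw [← Finset.sum_mul, hP.2]; ring
  unfold mutualInfo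
  rw [Finset.mul_sum]
  refine Finset.sum_le_sum fun j _ => ?_
  rcases (hp0 j).eq_or_lt with h | h
  · simp [← h]
  have hqP : ∀ l, q l = 0 → P j l = 0 := by
    intro k hk
    have := (Finset.sum_eq_zero_iff_of_nonneg
        (fun l _ => mul_nonneg (hp0 l) (hP.1 l k))).1 hk j (Finset.mem_univ _)
    rcases mul_eq_zero.1 this with h' | h'
    · linarith
    · exact h'
  have hk : ∀ k, (P * A) j k * Real.log ((P * A) j k / ∑ j', p j' * (P * A) j' k) ≤
      ∑ l, P j l * B l k * Real.log (P j l / q l) := by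
    intro k
    have := aux_log_sum (Finset.univ : Finset (Option (Fin M)))
      (fun o => o.elim (A (f k) k) (fun l => P j l * B l k))
      (fun o => o.elim (A (f k) k) (fun l => q l * B l k)) (by
        rintro (_ | l) _
        · exact hA.1 _ _
        · exact mul_nonneg (hP.1 _ _) (hB0 _ _)) (by
        rintro (_ | l) _
        · exact hA.1 _ _
        · exact mul_nonneg (hq0 _) (hB0 _ _)) (by
        rintro (_ | l) _ h0
        · exact h0
        · simp only [Option.elim] at h0 ⊢
          rcases mul_eq_zero.1 h0 with h' | h'
          · rw [hqP l h']; simp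
          · rw [h']; simp)
    simp only [Fintype.sum_option, Option.elim] at this
    rw [hqA, hPA]
    refine this.trans (le_of_eq ?_)
    have hz : A (f k) k * Real.log (A (f k) k / A (f k) k) = 0 := by
      by_cases h0 : A (f k) k = 0
      · simp [h0]
      · simp [div_self h0]
    rw [hz, zero_add]
    refine Finset.sum_congr rfl fun l _ => ?_
    by_cases h0 : B l k = 0
    · simp [h0]
    · rw [mul_div_mul_right _ _ h0]
  calc _ = p j * ∑ k, (P * A) j k * Real.log ((P * A) j k / ∑ j', p j' * (P * A) j' k) := by
        rw [Finset.mul_sum]; simp_rw [mul_assoc]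
    _ ≤ p j * ∑ k, ∑ l, P j l * B l k * Real.log (P j l / q l) :=
        mul_le_mul_of_nonneg_left (Finset.sum_le_sum fun k _ => hk k) h.le
    _ = _ := by
        rw [Finset.sum_comm, Finset.mul_sum, Finset.mul_sum]
        refine Finset.sum_congr rfl fun l _ => ?_
        have : ∀ k, P j l * B l k * Real.log (P j l / q l)
            = (P j l * Real.log (P j l / q l)) * B l k := fun k => by ring
        simp_rw [this]
        rw [← Finset.mul_sum, hB1]; ring

lemma aux_mi_one {M : ℕ} [NeZero M] (p : Fin M → ℝ) (hp0 : ∀ j, 0 ≤ p j)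
    (hp1 : ∑ j, p j = 1) : mutualInfo p 1 ≤ Real.log M := by
  have h1 : mutualInfo p 1 = - ∑ j, p j * Real.log (p j / 1) := by
    unfold mutualInfo
    rw [← Finset.sum_neg_distrib]
    refine Finset.sum_congr rfl fun j _ => ?_
    rw [Finset.sum_eq_single j]
    · simp [Matrix.one_apply]
    · intro k _ hk
      simp [Matrix.one_apply, hk.symm]
    · simp
  have := aux_log_sum Finset.univ p (fun _ => 1) (fun j _ => hp0 j) (by simp) (by simp)
  rw [hp1] at this
  simp only [Finset.sum_const, Finset.card_univ, Fintype.card_fin, nsmul_eq_mul, mul_one, one_mul,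
    one_div, Real.log_inv] at this
  rw [h1]
  linarith

lemma aux_chain {M : ℕ} [NeZero M] (p : Fin M → ℝ) (hp0 : ∀ j, 0 ≤ p j)
    (hp1 : ∑ j, p j = 1) (δ : ℝ) (l : List (Matrix (Fin M) (Fin M) ℝ))
    (hl : ∀ A ∈ l, IsStoch A ∧ ∀ f : Fin M → Fin M, δ ≤ ∑ k, A (f k) k) :
    IsStoch l.prod ∧ mutualInfo p l.prod ≤ (1 - δ) ^ l.length * Real.log M := by
  induction l using List.reverseRecOn with
  | nil =>
    refine ⟨⟨fun j k => ?_, fun j => ?_⟩, ?_⟩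
    · simp only [List.prod_nil, Matrix.one_apply]; split_ifs <;> norm_num
    · simp [Matrix.one_apply]
    · simpa using aux_mi_one p hp0 hp1
  | append_singleton l A ih =>
    obtain ⟨h1, h2⟩ := ih fun B hB => hl B (by simp [hB])
    obtain ⟨hA, hδ⟩ := hl A (by simp)
    rw [List.prod_append, List.prod_singleton]
    refine ⟨aux_stoch_mul h1 hA, (aux_mi_contract p hp0 hp1 h1 hA δ hδ).trans ?_⟩
    have hd : 0 ≤ 1 - δ := by
      have := hδ (fun _ => 0)
      rw [hA.2] at this; linarith
    rw [List.length_append, List.length_singleton, pow_succ', mul_assoc]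
    exact mul_le_mul_of_nonneg_left h2 hd

lemma aux_pi_gauss (N : ℕ) :
    (Measure.pi fun _ : Fin N => gaussianReal 0 1) =
      (volume : Measure (Fin N → ℝ)).withDensity
        (fun z => ENNReal.ofReal (∏ i, gaussianPDFReal 0 1 (z i))) := by
  refine Measure.pi_eq fun s hs => ?_
  rw [withDensity_apply _ (MeasurableSet.univ_pi hs), volume_pi, Measure.restrict_pi_pi,
    ← ofReal_integral_eq_lintegral_ofReal]
  · rw [integral_fintype_prod_eq_prod (𝕜 := ℝ) (E := fun _ : Fin N => ℝ)
      (f := fun _ x => gaussianPDFReal 0 1 x), ENNReal.ofReal_prod_of_nonneg]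
    · refine Finset.prod_congr rfl fun i _ => ?_
      rw [gaussianReal_apply_eq_integral _ one_ne_zero]
    · intro i _
      exact integral_nonneg fun x => gaussianPDFReal_nonneg _ _ _
  · exact Integrable.fintype_prod (f := fun (_ : Fin N) x => gaussianPDFReal 0 1 x)
      fun i => (integrable_gaussianPDFReal 0 1).restrict
  · exact ae_of_all _ fun z => Finset.prod_nonneg fun i _ => gaussianPDFReal_nonneg _ _ _

/-- standard Gaussian density on Euclidean space -/
noncomputable def gW (N : ℕ) (y : EuclideanSpace ℝ (Fin N)) : ENNReal :=
  ENNReal.ofReal (((Real.sqrt (2 * Real.pi))⁻¹) ^ N * Real.exp (-‖y‖ ^ 2 / 2))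

lemma gW_eq (N : ℕ) (y : EuclideanSpace ℝ (Fin N)) :
    gW N y = ENNReal.ofReal (∏ i, gaussianPDFReal 0 1 (y i)) := by
  unfold gW gaussianPDFReal
  congr 1
  rw [Finset.prod_mul_distrib, ← Real.exp_sum, EuclideanSpace.norm_sq_eq]
  simp [Finset.sum_div, neg_div]

lemma gW_meas (N : ℕ) : Measurable (gW N) := by
  unfold gW; fun_prop

lemma aux_gauss_apply (N : ℕ) (x : EuclideanSpace ℝ (Fin N)) (D : Set (EuclideanSpace ℝ (Fin N)))
    (hD : MeasurableSet D) :
    (Measure.pi fun _ : Fin N => gaussianReal 0 1) {z | x + WithLp.toLp 2 z ∈ D} =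
      ∫⁻ y in D, gW N (y - x) := by
  have hm : Measurable fun z : Fin N → ℝ => x + WithLp.toLp 2 z := by fun_prop
  have hm' : MeasurableSet {z : Fin N → ℝ | x + WithLp.toLp 2 z ∈ D} := hm hD
  rw [aux_pi_gauss, withDensity_apply _ hm', ← lintegral_indicator hm',
    ← lintegral_indicator hD,
    ← lintegral_add_left_eq_self (μ := (volume : Measure (EuclideanSpace ℝ (Fin N)))) _ x]
  rw [← (PiLp.volume_preserving_toLp (Fin N)).lintegral_comp_emb
    (MeasurableEquiv.toLp 2 (Fin N → ℝ)).measurableEmbedding]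
  refine lintegral_congr fun z => ?_
  by_cases h : x + WithLp.toLp 2 z ∈ D
  · rw [Set.indicator_of_mem h, Set.indicator_of_mem (by exact h), add_sub_cancel_left, gW_eq]
  · rw [Set.indicator_of_notMem h, Set.indicator_of_notMem (by exact h)]

lemma aux_lint_norm (n : ℕ) (f : ℝ → ENNReal) (hf : Measurable f) :
    ∫⁻ x : EuclideanSpace ℝ (Fin (n + 1)), f ‖x‖ =
      (volume : Measure (EuclideanSpace ℝ (Fin (n + 1)))).toSphere Set.univ *
        ∫⁻ s in Set.Ioi (0 : ℝ), ENNReal.ofReal (s ^ n) * f s := by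
  set μ := (volume : Measure (EuclideanSpace ℝ (Fin (n + 1)))) with hμ
  have hd : Module.finrank ℝ (EuclideanSpace ℝ (Fin (n + 1))) - 1 = n := by simp
  calc
    ∫⁻ x, f (‖x‖) ∂μ = ∫⁻ x : ({(0)}ᶜ : Set (EuclideanSpace ℝ (Fin (n + 1)))),
        f (‖x.1‖) ∂(μ.comap (↑)) := by
      rw [lintegral_subtype_comap (measurableSet_singleton _).compl fun x ↦ f (‖x‖),
        restrict_compl_singleton]
    _ = ∫⁻ x, f x.2 ∂μ.toSphere.prod (.volumeIoiPow n) := by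
      have := μ.measurePreserving_homeomorphUnitSphereProd.lintegral_comp_emb
        (Homeomorph.measurableEmbedding _) (f ∘ Subtype.val ∘ Prod.snd)
      rw [hd] at this
      simpa using this
    _ = μ.toSphere Set.univ * ∫⁻ x : Set.Ioi (0 : ℝ), f x ∂.volumeIoiPow n := by
      rw [lintegral_prod _ (by fun_prop)]
      simp [mul_comm]
    _ = _ := by
      congr 1
      rw [Measure.volumeIoiPow, lintegral_withDensity_eq_lintegral_mul _ (by fun_prop)
        (by fun_prop)]
      exact lintegral_subtype_comap measurableSet_Ioi (fun s : ℝ => ENNReal.ofReal (s ^ n) * f s)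

lemma aux_lint_split (n : ℕ) (F : ℝ → ℝ → ENNReal) (hF : Measurable (fun p : ℝ × ℝ => F p.1 p.2)) :
    ∫⁻ y : EuclideanSpace ℝ (Fin (n + 2)), F (y 0) (Real.sqrt (∑ i : Fin (n + 1), y i.succ ^ 2)) =
      (volume : Measure (EuclideanSpace ℝ (Fin (n + 1)))).toSphere Set.univ *
      ∫⁻ p : ℝ × ℝ, (Set.Ioi (0 : ℝ)).indicator (fun s => ENNReal.ofReal (s ^ n) * F p.1 s) p.2 := by
  rw [← (PiLp.volume_preserving_toLp (Fin (n + 2))).lintegral_comp_emb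
    (MeasurableEquiv.toLp 2 (Fin (n + 2) → ℝ)).measurableEmbedding]
  rw [← (volume_preserving_piFinSuccAbove (fun _ : Fin (n + 2) => ℝ) 0).symm.lintegral_comp_emb
    (MeasurableEquiv.piFinSuccAbove (fun _ : Fin (n + 2) => ℝ) 0).symm.measurableEmbedding]
  have h1 : ∀ p : ℝ × (Fin (n + 1) → ℝ),
      F ((WithLp.toLp 2 ((MeasurableEquiv.piFinSuccAbove (fun _ : Fin (n + 2) => ℝ) 0).symm p) :
        EuclideanSpace ℝ (Fin (n + 2))) 0)
      (Real.sqrt (∑ i : Fin (n + 1),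
        ((WithLp.toLp 2 ((MeasurableEquiv.piFinSuccAbove (fun _ : Fin (n + 2) => ℝ) 0).symm p) :
        EuclideanSpace ℝ (Fin (n + 2))) i.succ) ^ 2)) =
      F p.1 ‖(WithLp.toLp 2 p.2 : EuclideanSpace ℝ (Fin (n + 1)))‖ := by
    intro p
    rw [EuclideanSpace.norm_eq]
    simp [MeasurableEquiv.piFinSuccAbove]
  refine (lintegral_congr h1).trans ?_
  have hI : Measurable (fun p : ℝ × ℝ => (Set.Ioi (0 : ℝ)).indicator
      (fun s => ENNReal.ofReal (s ^ n) * F p.1 s) p.2) := by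
    have : Measurable ((Prod.snd ⁻¹' Set.Ioi (0 : ℝ)).indicator
        (fun p : ℝ × ℝ => ENNReal.ofReal (p.2 ^ n) * F p.1 p.2)) :=
      Measurable.indicator (by fun_prop) (measurable_snd measurableSet_Ioi)
    exact this
  have hG : Measurable (fun p : ℝ × (Fin (n + 1) → ℝ) =>
      F p.1 ‖(WithLp.toLp 2 p.2 : EuclideanSpace ℝ (Fin (n + 1)))‖) := by
    have h3 : Measurable (fun p : ℝ × (Fin (n + 1) → ℝ) =>
      (p.1, ‖(WithLp.toLp 2 p.2 : EuclideanSpace ℝ (Fin (n + 1)))‖)) := by fun_prop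
    exact hF.comp h3
  rw [Measure.volume_eq_prod, lintegral_prod _ hG.aemeasurable, Measure.volume_eq_prod,
    lintegral_prod _ hI.aemeasurable, ← lintegral_const_mul _ hI.lintegral_prod_right']
  refine lintegral_congr fun a => ?_
  have h2 := (PiLp.volume_preserving_toLp (Fin (n + 1))).lintegral_comp_emb
    (MeasurableEquiv.toLp 2 (Fin (n + 1) → ℝ)).measurableEmbedding (fun x => F a ‖x‖)
  have h4 : Measurable (F a) := hF.comp (by fun_prop : Measurable fun s : ℝ => (a, s))
  dsimp only
  rw [h2, aux_lint_norm n (F a) h4, ← lintegral_indicator measurableSet_Ioi]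

/-- Integral of a radial function over a circular cone. -/
lemma aux_cone (n : ℕ) (T : ℝ → ENNReal) (hT : Measurable T) : ∃ K : ENNReal, ∀ c : ℝ,
    ∫⁻ y in {y : EuclideanSpace ℝ (Fin (n + 2)) | y 0 ≤ c * ‖y‖}, T ‖y‖ =
      K * ∫⁻ θ in Set.Ioo 0 Real.pi ∩ {θ | Real.cos θ ≤ c}, ENNReal.ofReal (Real.sin θ ^ n) := by
  refine ⟨(volume : Measure (EuclideanSpace ℝ (Fin (n + 1)))).toSphere Set.univ *
    ∫⁻ r in Set.Ioi (0 : ℝ), ENNReal.ofReal (r * r ^ n) * T r, fun c => ?_⟩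
  have hS : MeasurableSet {y : EuclideanSpace ℝ (Fin (n + 2)) | y 0 ≤ c * ‖y‖} :=
    measurableSet_le (by fun_prop) (by fun_prop)
  rw [← lintegral_indicator hS]
  set F : ℝ → ℝ → ENNReal := fun a s =>
    {p : ℝ × ℝ | p.1 ≤ c * Real.sqrt (p.1 ^ 2 + p.2 ^ 2)}.indicator
      (fun p => T (Real.sqrt (p.1 ^ 2 + p.2 ^ 2))) (a, s) with hF
  have hFm : Measurable (fun p : ℝ × ℝ => F p.1 p.2) := by
    refine Measurable.indicator (by fun_prop) (measurableSet_le (by fun_prop) (by fun_prop))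
  have h1 : ∀ y : EuclideanSpace ℝ (Fin (n + 2)),
      {y : EuclideanSpace ℝ (Fin (n + 2)) | y 0 ≤ c * ‖y‖}.indicator (fun y => T ‖y‖) y =
      F (y 0) (Real.sqrt (∑ i : Fin (n + 1), y i.succ ^ 2)) := by
    intro y
    have : ‖y‖ = Real.sqrt (y 0 ^ 2 + Real.sqrt (∑ i : Fin (n + 1), y i.succ ^ 2) ^ 2) := by
      rw [EuclideanSpace.norm_eq, Fin.sum_univ_succ,
        Real.sq_sqrt (Finset.sum_nonneg fun i _ => sq_nonneg _)]
      simp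
    simp only [hF, Set.indicator_apply, Set.mem_ofPred_eq, ← this]
  rw [lintegral_congr h1, aux_lint_split n F hFm, mul_assoc]
  congr 1
  rw [← lintegral_comp_polarCoord_symm]
  have hU : MeasurableSet (Set.Ioo 0 Real.pi ∩ {θ | Real.cos θ ≤ c}) :=
    measurableSet_Ioo.inter (measurableSet_le (by fun_prop) (by fun_prop))
  have h2 : ∀ p ∈ polarCoord.target, ENNReal.ofReal p.1 •
      (Set.Ioi (0 : ℝ)).indicator (fun s => ENNReal.ofReal (s ^ n) * F (polarCoord.symm p).1 s)
        (polarCoord.symm p).2 =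
      (ENNReal.ofReal (p.1 * p.1 ^ n) * T p.1) *
        (Set.Ioo 0 Real.pi ∩ {θ | Real.cos θ ≤ c}).indicator
          (fun θ => ENNReal.ofReal (Real.sin θ ^ n)) p.2 := by
    rintro ⟨r, θ⟩ ⟨hr, hθ⟩
    simp only [Set.mem_Ioi, Set.mem_Ioo] at hr hθ
    have hsq : Real.sqrt ((r * Real.cos θ) ^ 2 + (r * Real.sin θ) ^ 2) = r := by
      rw [← Real.sqrt_sq hr.le]
      congr 1
      rw [Real.sqrt_sq hr.le]
      linear_combination r ^ 2 * Real.sin_sq_add_cos_sq θ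
    simp only [polarCoord_symm_apply, hF, Set.indicator_apply, Set.mem_ofPred_eq, Set.mem_inter_iff,
      Set.mem_Ioi, Set.mem_Ioo, hsq, smul_eq_mul]
    have hsin : 0 < r * Real.sin θ ↔ 0 < θ ∧ θ < Real.pi := by
      constructor
      · intro h
        refine ⟨?_, hθ.2⟩
        by_contra h0
        have := Real.sin_nonpos_of_nonpos_of_neg_pi_le (not_lt.1 h0) hθ.1.le
        nlinarith
      · intro h
        exact mul_pos hr (Real.sin_pos_of_pos_of_lt_pi h.1 h.2)
    have hcos : r * Real.cos θ ≤ c * r ↔ Real.cos θ ≤ c := by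
      rw [mul_comm]; exact mul_le_mul_iff_left₀ hr
    simp only [hcos]
    by_cases hA : 0 < r * Real.sin θ
    · rw [if_pos hA]
      by_cases hB : Real.cos θ ≤ c
      · have hs : 0 < Real.sin θ := pos_of_mul_pos_right hA hr.le
        rw [if_pos hB, if_pos ⟨hsin.1 hA, hB⟩, mul_pow, ENNReal.ofReal_mul (by positivity),
          ENNReal.ofReal_mul (by positivity)]
        ring
      · rw [if_neg hB, if_neg (fun h => hB h.2)]; simp
    · rw [if_neg hA, if_neg (fun h => hA (hsin.2 h.1))]; simp
  rw [setLIntegral_congr_fun polarCoord.open_target.measurableSet h2]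
  have htar : polarCoord.target = Set.Ioi (0 : ℝ) ×ˢ Set.Ioo (-Real.pi) Real.pi := rfl
  rw [htar, Measure.volume_eq_prod, ← Measure.prod_restrict,
    lintegral_prod_mul (f := fun r : ℝ => ENNReal.ofReal (r * r ^ n) * T r)
      (g := (Set.Ioo 0 Real.pi ∩ {θ | Real.cos θ ≤ c}).indicator
          (fun θ => ENNReal.ofReal (Real.sin θ ^ n))) (by fun_prop)
      (Measurable.indicator (by fun_prop) hU).aemeasurable]
  congr 1
  rw [lintegral_indicator hU, Measure.restrict_restrict hU]
  congr 2
  ext θ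
  simp only [Set.mem_inter_iff, Set.mem_Ioo, Set.mem_ofPred_eq]
  constructor
  · rintro ⟨h, _⟩; exact h
  · rintro h; exact ⟨h, by linarith [h.1.1, Real.pi_pos], h.1.2⟩

lemma aux_wallis (n : ℕ) : ∫ θ in (0 : ℝ)..Real.pi, Real.sin θ ^ n =
    Real.sqrt Real.pi * Real.Gamma (((n : ℝ) + 1) / 2) / Real.Gamma ((n : ℝ) / 2 + 1) := by
  induction n using Nat.twoStepInduction with
  | zero =>
    simp only [pow_zero, intervalIntegral.integral_const, Nat.cast_zero, zero_add, zero_div,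
      Real.Gamma_one, Real.Gamma_one_half_eq]
    rw [Real.mul_self_sqrt Real.pi_pos.le]; simp
  | one =>
    have h : Real.Gamma ((1 : ℝ) / 2 + 1) = 1 / 2 * Real.sqrt Real.pi := by
      rw [Real.Gamma_add_one (by norm_num), Real.Gamma_one_half_eq]
    have h2 : ((1 : ℝ) + 1) / 2 = 1 := by norm_num
    have hp : Real.sqrt Real.pi ≠ 0 := (Real.sqrt_pos.2 Real.pi_pos).ne'
    simp only [pow_one, Nat.cast_one, h, h2, Real.Gamma_one, integral_sin]
    field_simp
    simp; norm_num
  | more n ih _ =>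
    rw [integral_sin_pow, ih]
    have h1 : ((n + 2 : ℕ) + 1 : ℝ) / 2 = ((n : ℝ) + 1) / 2 + 1 := by push_cast; ring
    have h2 : ((n + 2 : ℕ) : ℝ) / 2 + 1 = ((n : ℝ) / 2 + 1) + 1 := by push_cast; ring
    rw [h1, h2, Real.Gamma_add_one (s := ((n : ℝ) + 1) / 2) (by positivity),
      Real.Gamma_add_one (s := (n : ℝ) / 2 + 1) (by positivity)]
    have := Real.Gamma_pos_of_pos (by positivity : 0 < (n : ℝ) / 2 + 1)
    simp
    field_simp

lemma aux_g_pi (n : ℕ) : g (n + 2) Real.pi =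
    2 * Real.pi ^ (((n + 2 : ℕ) : ℝ) / 2) / Real.Gamma (((n + 2 : ℕ) : ℝ) / 2) := by
  unfold g
  rw [Nat.add_sub_cancel, aux_wallis]
  have h1 : (((n + 2 : ℕ) : ℝ) + 1) / 2 = ((n : ℝ) + 1) / 2 + 1 := by push_cast; ring
  have h2 : ((n + 2 : ℕ) : ℝ) / 2 = (n : ℝ) / 2 + 1 := by push_cast; ring
  have h3 : (((n + 2 : ℕ) : ℝ) - 1) / 2 = ((n : ℝ) + 1) / 2 := by push_cast; ring
  have h4 : (((n + 2 : ℕ) : ℝ) - 1) = (n : ℝ) + 1 := by push_cast; ring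
  have h5 : (n : ℝ) / 2 + 1 = ((n : ℝ) + 1) / 2 + 1 / 2 := by ring
  rw [h1, h3, h4, h2, Real.Gamma_add_one (s := ((n : ℝ) + 1) / 2) (by positivity)]
  have hp : Real.pi ^ ((n : ℝ) / 2 + 1) = Real.pi ^ (((n : ℝ) + 1) / 2) * Real.sqrt Real.pi := by
    rw [h5, Real.rpow_add Real.pi_pos, Real.sqrt_eq_rpow]
  rw [hp]
  have := Real.Gamma_pos_of_pos (by positivity : 0 < (n : ℝ) / 2 + 1)
  have := Real.Gamma_pos_of_pos (by positivity : 0 < ((n : ℝ) + 1) / 2)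
  field_simp

lemma aux_sin_int (n : ℕ) (a b : ℝ) :
    IntervalIntegrable (fun θ => Real.sin θ ^ n) volume a b :=
  (Continuous.intervalIntegrable (by fun_prop) _ _)

lemma aux_sin_mono (n : ℕ) {a b : ℝ} (ha : 0 ≤ a) (hab : a < b) (hb : b ≤ Real.pi) :
    ∫ θ in (0 : ℝ)..a, Real.sin θ ^ n < ∫ θ in (0 : ℝ)..b, Real.sin θ ^ n := by
  rw [← intervalIntegral.integral_add_adjacent_intervals (aux_sin_int n 0 a) (aux_sin_int n a b)]
  have := intervalIntegral.intervalIntegral_pos_of_pos_on (aux_sin_int n a b) (by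
    intro x hx
    exact pow_pos (Real.sin_pos_of_pos_of_lt_pi (by linarith [hx.1]) (by linarith [hx.2])) n) hab
  linarith

lemma aux_sin_half (n : ℕ) : 2 * ∫ θ in (0 : ℝ)..(Real.pi / 2), Real.sin θ ^ n =
    ∫ θ in (0 : ℝ)..Real.pi, Real.sin θ ^ n := by
  rw [← intervalIntegral.integral_add_adjacent_intervals (aux_sin_int n 0 (Real.pi / 2))
    (aux_sin_int n (Real.pi / 2) Real.pi)]
  have := intervalIntegral.integral_comp_sub_left (a := 0) (b := Real.pi / 2)
    (fun θ => Real.sin θ ^ n) Real.pi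
  simp only [Real.sin_pi_sub, sub_zero] at this
  have h : Real.pi - Real.pi / 2 = Real.pi / 2 := by ring
  rw [h] at this
  rw [← this]; ring

lemma aux_phi0 (n M : ℕ) (hM : 2 ≤ M) : ∃ φ ∈ Set.Icc (Real.pi / 2) Real.pi,
    (∀ ψ ∈ Set.Icc 0 Real.pi, ((M : ℝ) - 1) / M * (2 * Real.pi ^ (((n + 2 : ℕ) : ℝ) / 2) /
        Real.Gamma (((n + 2 : ℕ) : ℝ) / 2)) ≤ g (n + 2) ψ → φ ≤ ψ) ∧
    M * ∫ θ in φ..Real.pi, Real.sin θ ^ n = ∫ θ in (0 : ℝ)..Real.pi, Real.sin θ ^ n := by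
  have hM' : (2 : ℝ) ≤ M := by exact_mod_cast hM
  have hpi := Real.pi_pos
  set G : ℝ → ℝ := fun φ => ∫ θ in (0 : ℝ)..φ, Real.sin θ ^ n with hG
  have hGpi : 0 < G Real.pi := integral_sin_pow_pos n
  have hhalf : 2 * G (Real.pi / 2) = G Real.pi := aux_sin_half n
  have hcont : Continuous G := intervalIntegral.continuous_primitive (aux_sin_int n) 0
  have hfr : ((M : ℝ) - 1) / M * G Real.pi ∈ Set.Icc (G (Real.pi / 2)) (G Real.pi) := by
    have h1 : ((M : ℝ) - 1) / M ≤ 1 := by rw [div_le_one (by positivity)]; linarith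
    have h2 : 1 / 2 ≤ ((M : ℝ) - 1) / M := by
      rw [div_le_div_iff₀ (by norm_num) (by positivity)]; linarith
    constructor <;> nlinarith
  obtain ⟨φ, hφ, hφG⟩ := intermediate_value_Icc (by linarith : Real.pi / 2 ≤ Real.pi)
    hcont.continuousOn hfr
  refine ⟨φ, hφ, ?_, ?_⟩
  · intro ψ hψ h
    rw [← aux_g_pi] at h
    unfold g at h
    rw [Nat.add_sub_cancel] at h
    by_contra! hlt
    have h3 : G ψ < G φ := aux_sin_mono n hψ.1 hlt hφ.2
    rw [hφG] at h3
    set K := (((n + 2 : ℕ) : ℝ) - 1) * Real.pi ^ ((((n + 2 : ℕ) : ℝ) - 1) / 2) /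
      Real.Gamma ((((n + 2 : ℕ) : ℝ) + 1) / 2) with hK
    have hKpos : 0 < K := by
      have : (0 : ℝ) < ((n + 2 : ℕ) : ℝ) - 1 := by push_cast; linarith [(n.cast_nonneg : (0 : ℝ) ≤ n)]
      have := Real.Gamma_pos_of_pos (by positivity : 0 < (((n + 2 : ℕ) : ℝ) + 1) / 2)
      positivity
    have := mul_lt_mul_of_pos_left h3 hKpos
    have h4 : K * G ψ = K * ∫ θ in (0 : ℝ)..ψ, Real.sin θ ^ n := rfl
    have h5 : ((M : ℝ) - 1) / M * (K * ∫ θ in (0 : ℝ)..Real.pi, Real.sin θ ^ n) =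
      K * (((M : ℝ) - 1) / M * G Real.pi) := by simp only [hG]; ring
    linarith
  · have := intervalIntegral.integral_add_adjacent_intervals (aux_sin_int n 0 φ)
      (aux_sin_int n φ Real.pi)
    have h6 : ∫ θ in φ..Real.pi, Real.sin θ ^ n = G Real.pi - G φ := by
      simp only [hG]; linarith
    rw [h6, hφG]
    change _ = G Real.pi
    field_simp; ring

lemma aux_frac (n M : ℕ) (φ : ℝ) (hφ : φ ∈ Set.Icc (Real.pi / 2) Real.pi)
    (hM : M * ∫ θ in φ..Real.pi, Real.sin θ ^ n = ∫ θ in (0 : ℝ)..Real.pi, Real.sin θ ^ n)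
    (T : ℝ → ENNReal) (hT : Measurable T) :
    M * ∫⁻ y in {y : EuclideanSpace ℝ (Fin (n + 2)) | y 0 ≤ Real.cos φ * ‖y‖}, T ‖y‖ ≤
      ∫⁻ y : EuclideanSpace ℝ (Fin (n + 2)), T ‖y‖ := by
  obtain ⟨K, hK⟩ := aux_cone n T hT
  have hpi := Real.pi_pos
  have huniv : {y : EuclideanSpace ℝ (Fin (n + 2)) | y 0 ≤ 1 * ‖y‖} = Set.univ := by
    ext y
    simp only [Set.mem_ofPred_eq, one_mul, Set.mem_univ, iff_true]
    exact (le_abs_self _).trans (PiLp.norm_apply_le y 0)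
  have h1 := hK 1
  rw [huniv, setLIntegral_univ] at h1
  rw [h1, hK, mul_left_comm]
  gcongr
  have conv : ∀ a b : ℝ, 0 ≤ a → a ≤ b → b ≤ Real.pi →
      ∫⁻ θ in Set.Ioc a b, ENNReal.ofReal (Real.sin θ ^ n) =
        ENNReal.ofReal (∫ θ in a..b, Real.sin θ ^ n) := by
    intro a b ha hab hb
    rw [intervalIntegral.integral_of_le hab,
      ofReal_integral_eq_lintegral_ofReal (aux_sin_int n a b).1]
    filter_upwards [ae_restrict_mem measurableSet_Ioc] with θ hθ
    exact pow_nonneg (Real.sin_nonneg_of_nonneg_of_le_pi (by linarith [hθ.1])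
      (by linarith [hθ.2])) n
  have hsub : ∫⁻ θ in Set.Ioo 0 Real.pi ∩ {θ | Real.cos θ ≤ Real.cos φ},
      ENNReal.ofReal (Real.sin θ ^ n) ≤
      ∫⁻ θ in Set.Ioc φ Real.pi, ENNReal.ofReal (Real.sin θ ^ n) := by
    rw [restrict_Ioc_eq_restrict_Icc]
    refine lintegral_mono_set ?_
    rintro θ ⟨hθ, hc⟩
    refine ⟨?_, hθ.2.le⟩
    by_contra! hlt
    have := Real.cos_lt_cos_of_nonneg_of_le_pi hθ.1.le hφ.2 hlt
    exact absurd hc (not_le.2 this)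
  have hset : Set.Ioo 0 Real.pi ∩ {θ | Real.cos θ ≤ 1} = Set.Ioo 0 Real.pi := by
    ext θ; simp [Real.cos_le_one]
  rw [hset, restrict_Ioo_eq_restrict_Ioc, conv 0 Real.pi le_rfl hpi.le le_rfl]
  refine (mul_le_mul_right hsub _).trans ?_
  rw [conv φ Real.pi (by linarith [hφ.1]) hφ.2 le_rfl, ← hM, ENNReal.ofReal_mul (by positivity),
    ENNReal.ofReal_natCast]

lemma aux_rot (n : ℕ) (u : EuclideanSpace ℝ (Fin (n + 2))) (hu : ‖u‖ = 1) :
    ∃ L : EuclideanSpace ℝ (Fin (n + 2)) ≃ₗᵢ[ℝ] EuclideanSpace ℝ (Fin (n + 2)),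
      L u = EuclideanSpace.single 0 1 :=
  ⟨_, Submodule.reflection_sub (by simp [hu])⟩

lemma aux_rot_int (n : ℕ) (u : EuclideanSpace ℝ (Fin (n + 2)))
    (L : EuclideanSpace ℝ (Fin (n + 2)) ≃ₗᵢ[ℝ] EuclideanSpace ℝ (Fin (n + 2)))
    (hL : L u = EuclideanSpace.single 0 1) (c : ℝ) (H : EuclideanSpace ℝ (Fin (n + 2)) → ENNReal) :
    ∫⁻ y in {y | inner ℝ u y ≤ c * ‖y‖}, H (L y) = ∫⁻ y in {y | y 0 ≤ c * ‖y‖}, H y := by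
  have := L.measurePreserving.setLIntegral_comp_preimage_emb
    L.toHomeomorph.measurableEmbedding H {y | y 0 ≤ c * ‖y‖}
  rw [← this]
  congr 2
  ext y
  simp only [Set.mem_ofPred_eq, Set.mem_preimage, LinearIsometryEquiv.norm_map]
  rw [← L.inner_map_map, hL]
  simp [EuclideanSpace.inner_single_left]

/-- the radial threshold density -/
noncomputable def gT (N : ℕ) (a c r : ℝ) : ENNReal :=
  ENNReal.ofReal (((Real.sqrt (2 * Real.pi))⁻¹) ^ N *
    Real.exp (-(r ^ 2 - 2 * a * c * r + a ^ 2) / 2))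

lemma gW_total (N : ℕ) : ∫⁻ y, gW N y = 1 := by
  have := aux_gauss_apply N 0 Set.univ MeasurableSet.univ
  simp only [Set.mem_univ, sub_zero, setLIntegral_univ] at this
  rw [← this]
  have h : {z : Fin N → ℝ | True} = Set.univ := by ext; simp
  rw [h, measure_univ]

lemma gW_le_gT {N : ℕ} (a c r : ℝ) (y x : EuclideanSpace ℝ (Fin N))
    (h : r ^ 2 - 2 * a * c * r + a ^ 2 ≤ ‖y - x‖ ^ 2) : gW N (y - x) ≤ gT N a c r := by
  unfold gW gT
  refine ENNReal.ofReal_le_ofReal ?_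
  gcongr

lemma gT_le_gW {N : ℕ} (a c r : ℝ) (y x : EuclideanSpace ℝ (Fin N))
    (h : ‖y - x‖ ^ 2 ≤ r ^ 2 - 2 * a * c * r + a ^ 2) : gT N a c r ≤ gW N (y - x) := by
  unfold gW gT
  refine ENNReal.ofReal_le_ofReal ?_
  gcongr

lemma gW_le_gW {N : ℕ} (y x x' : EuclideanSpace ℝ (Fin N))
    (h : ‖y - x‖ ^ 2 ≤ ‖y - x'‖ ^ 2) : gW N (y - x') ≤ gW N (y - x) := by
  unfold gW
  refine ENNReal.ofReal_le_ofReal ?_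
  gcongr

lemma aux_geom (n M : ℕ) (φ : ℝ) (hφ : φ ∈ Set.Icc (Real.pi / 2) Real.pi)
    (hM : M * ∫ θ in φ..Real.pi, Real.sin θ ^ n = ∫ θ in (0 : ℝ)..Real.pi, Real.sin θ ^ n)
    (a : ℝ) (ha : 0 ≤ a) (x : Fin M → EuclideanSpace ℝ (Fin (n + 2))) (hx : ∀ k, ‖x k‖ ≤ a)
    (κ : EuclideanSpace ℝ (Fin (n + 2)) → Fin M) (hκ : Measurable κ) :
    M * ∫⁻ y in {y : EuclideanSpace ℝ (Fin (n + 2)) | y 0 ≤ Real.cos φ * ‖y‖},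
        gW (n + 2) (y - a • EuclideanSpace.single 0 1) ≤
      ∑ k, ∫⁻ y in {y | κ y = k}, gW (n + 2) (y - x k) := by
  set c := Real.cos φ with hc
  have hc0 : c ≤ 0 := Real.cos_nonpos_of_pi_div_two_le_of_le hφ.1 (by linarith [hφ.2, Real.pi_pos])
  set t : EuclideanSpace ℝ (Fin (n + 2)) → ENNReal := fun y => gT (n + 2) a c ‖y‖ with ht
  have hTm : Measurable (gT (n + 2) a c) := by unfold gT; fun_prop
  have htm : Measurable t := by fun_prop
  have htfin : ∫⁻ y, t y ≠ ⊤ := by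
    have : ∫⁻ y, t y ≤ ∫⁻ y, gW (n + 2) y := by
      refine lintegral_mono fun y => ?_
      have := gT_le_gW a c ‖y‖ y 0 (by
        rw [sub_zero]
        nlinarith [norm_nonneg y, mul_nonneg ha (norm_nonneg y), sq_nonneg a])
      simpa using this
    rw [gW_total] at this
    exact (this.trans_lt ENNReal.one_lt_top).ne
  -- directions
  have hdir : ∀ k, ∃ u : EuclideanSpace ℝ (Fin (n + 2)), ‖u‖ = 1 ∧ x k = ‖x k‖ • u := by
    intro k
    by_cases h : x k = 0
    · exact ⟨EuclideanSpace.single 0 1, by simp, by simp [h]⟩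
    · refine ⟨‖x k‖⁻¹ • x k, ?_, ?_⟩
      · rw [norm_smul, norm_inv, norm_norm, inv_mul_cancel₀ (norm_ne_zero_iff.2 h)]
      · rw [smul_smul, mul_inv_cancel₀ (norm_ne_zero_iff.2 h), one_smul]
  choose u hu hxu using hdir
  set C : Fin M → Set (EuclideanSpace ℝ (Fin (n + 2))) :=
    fun k => {y | inner ℝ (u k) y ≤ c * ‖y‖} with hC
  have hCm : ∀ k, MeasurableSet (C k) := fun k => measurableSet_le (by fun_prop) (by fun_prop)
  have hrotW : ∀ k, ∫⁻ y in C k, gW (n + 2) (y - a • u k) =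
      ∫⁻ y in {y : EuclideanSpace ℝ (Fin (n + 2)) | y 0 ≤ c * ‖y‖},
        gW (n + 2) (y - a • EuclideanSpace.single 0 1) := by
    intro k
    obtain ⟨L, hL⟩ := aux_rot n (u k) (hu k)
    rw [← aux_rot_int n (u k) L hL]
    refine lintegral_congr fun y => ?_
    unfold gW
    rw [← hL, ← L.map_smul, ← L.map_sub, L.norm_map]
  have hrott : ∀ k, ∫⁻ y in C k, t y =
      ∫⁻ y in {y : EuclideanSpace ℝ (Fin (n + 2)) | y 0 ≤ c * ‖y‖}, t y := by
    intro k
    obtain ⟨L, hL⟩ := aux_rot n (u k) (hu k)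
    rw [← aux_rot_int n (u k) L hL]
    refine lintegral_congr fun y => ?_
    simp [ht]
  have hsumt : ∑ k, ∫⁻ y in C k, t y ≤ ∫⁻ y, t y := by
    simp_rw [hrott]
    rw [Finset.sum_const, Finset.card_univ, Fintype.card_fin, nsmul_eq_mul]
    exact aux_frac n M φ hφ hM _ hTm
  have hDm : ∀ k, MeasurableSet {y | κ y = k} := fun k => hκ (measurableSet_singleton k)
  have hnorm : ∀ (b : ℝ) k y, ‖y - b • u k‖ ^ 2 = ‖y‖ ^ 2 - 2 * b * inner ℝ (u k) y + b ^ 2 := by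
    intro b k y
    rw [norm_sub_sq_real, inner_smul_right, norm_smul, hu, real_inner_comm]
    simp; ring
  have hm1 : ∀ k, ∀ y ∈ C k, gW (n + 2) (y - a • u k) ≤ t y := by
    intro k y hy
    refine gW_le_gT _ _ _ _ _ ?_
    rw [hnorm]
    have := mul_le_mul_of_nonneg_left hy ha
    linarith
  have hm2 : ∀ k, ∀ y ∈ C k, gW (n + 2) (y - a • u k) ≤ gW (n + 2) (y - x k) := by
    intro k y hy
    refine gW_le_gW _ _ _ ?_
    conv_lhs => rw [hxu k]
    rw [hnorm, hnorm]
    have h1 : inner ℝ (u k) y ≤ 0 := le_trans hy (mul_nonpos_of_nonpos_of_nonneg hc0 (norm_nonneg y))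
    nlinarith [hx k, norm_nonneg (x k)]
  have hm3 : ∀ k, ∀ y ∉ C k, t y ≤ gW (n + 2) (y - x k) := by
    intro k y hy
    refine gT_le_gW _ _ _ _ _ ?_
    conv_lhs => rw [hxu k]
    rw [hnorm]
    have h1 : c * ‖y‖ ≤ inner ℝ (u k) y := (not_le.1 hy).le
    have h2 : c * ‖y‖ ≤ 0 := mul_nonpos_of_nonpos_of_nonneg hc0 (norm_nonneg y)
    nlinarith [hx k, norm_nonneg (x k), mul_le_mul_of_nonneg_left h1 (norm_nonneg (x k)),
      mul_le_mul_of_nonpos_right (hx k) h2]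
  have hgm : ∀ v, Measurable fun y => gW (n + 2) (y - v) := fun v =>
    (gW_meas _).comp (by fun_prop)
  -- pointwise inequality
  have hpt : ∀ y, (∑ k, (C k).indicator (fun y => gW (n + 2) (y - a • u k)) y) + t y ≤
      (∑ k, {y | κ y = k}.indicator (fun y => gW (n + 2) (y - x k)) y) +
        ∑ k, (C k).indicator t y := by
    intro y
    have hD : ∑ k, {y | κ y = k}.indicator (fun y => gW (n + 2) (y - x k)) y =
        gW (n + 2) (y - x (κ y)) := by
      rw [Finset.sum_eq_single (κ y)]
      · simp
      · intro k _ hk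
        simp [hk.symm]
      · simp
    rw [hD]
    have hle : ∀ k, (C k).indicator (fun y => gW (n + 2) (y - a • u k)) y ≤
        (C k).indicator t y := by
      intro k
      by_cases hy : y ∈ C k
      · simpa [Set.indicator_of_mem hy] using hm1 k y hy
      · simp [Set.indicator_of_notMem hy]
    by_cases hy : y ∈ C (κ y)
    · rw [← Finset.add_sum_erase _ _ (Finset.mem_univ (κ y)),
        ← Finset.add_sum_erase _ (fun k => (C k).indicator t y) (Finset.mem_univ (κ y))]
      rw [Set.indicator_of_mem hy, Set.indicator_of_mem hy, add_assoc,
        add_comm _ (t y)]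
      exact add_le_add (hm2 _ y hy) (add_le_add le_rfl (Finset.sum_le_sum fun k _ => hle k))
    · rw [add_comm]
      exact add_le_add (hm3 _ y hy) (Finset.sum_le_sum fun k _ => hle k)
  have hint := lintegral_mono (μ := (volume : Measure (EuclideanSpace ℝ (Fin (n + 2))))) hpt
  rw [lintegral_add_right _ htm, lintegral_finsetSum _ (fun k _ => (hgm _).indicator (hCm k)),
    lintegral_add_left (Finset.measurable_fun_sum _ fun k _ => (hgm _).indicator (hDm k)),
    lintegral_finsetSum _ (fun k _ => (hgm _).indicator (hDm k)),
    lintegral_finsetSum _ (fun k _ => htm.indicator (hCm k))] at hint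
  simp_rw [lintegral_indicator (hCm _), lintegral_indicator (hDm _), hrotW] at hint
  rw [Finset.sum_const, Finset.card_univ, Fintype.card_fin, nsmul_eq_mul] at hint
  have h2 := hint.trans (add_le_add le_rfl hsumt)
  exact (ENNReal.add_le_add_iff_right htfin).1 h2

lemma aux_Q_le (n M : ℕ) (γ : ℝ) (φ : ℝ) (hφ : φ ∈ Set.Icc (Real.pi / 2) Real.pi) (X : ℝ)
    (hX : 0 < X) (hmin : ∀ ψ ∈ Set.Icc 0 Real.pi, X ≤ g (n + 2) ψ → φ ≤ ψ) :
    Qfun X (n + 2) γ ≤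
      (∫⁻ y in {y : EuclideanSpace ℝ (Fin (n + 2)) | y 0 ≤ Real.cos φ * ‖y‖},
        gW (n + 2) (y - Real.sqrt ((n + 2 : ℕ) * γ) • EuclideanSpace.single 0 1)).toReal := by
  rw [← aux_gauss_apply _ _ _ (measurableSet_le (by fun_prop) (by fun_prop))]
  unfold Qfun
  refine ENNReal.toReal_mono (measure_ne_top _ _) (measure_mono ?_)
  intro z hz
  simp only [Set.mem_ofPred_eq] at hz ⊢
  set s := ∑ l ∈ Finset.univ.erase (0 : Fin (n + 2)), z l ^ 2 with hs
  set a := Real.sqrt ((n + 2 : ℕ) * γ) with ha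
  by_cases h0 : 0 < s
  · have hPhi : Phi (n + 2) γ z = arccot ((a + z 0) / Real.sqrt s) := by
      unfold Phi; rw [if_pos h0]
    rw [hPhi] at hz
    have h1 := hmin (arccot ((a + z 0) / Real.sqrt s)) (by
      unfold arccot
      have := Real.arctan_lt_pi_div_two ((a + z 0) / Real.sqrt s)
      have := Real.neg_pi_div_two_lt_arctan ((a + z 0) / Real.sqrt s)
      constructor <;> linarith) hz
    have h2 : Real.cos (arccot ((a + z 0) / Real.sqrt s)) ≤ Real.cos φ := by
      refine Real.cos_le_cos_of_nonneg_of_le_pi (by linarith [hφ.1, Real.pi_pos]) ?_ h1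
      unfold arccot
      linarith [Real.neg_pi_div_two_lt_arctan ((a + z 0) / Real.sqrt s)]
    unfold arccot at h2
    rw [Real.cos_pi_div_two_sub, Real.sin_arctan] at h2
    have hnorm : ‖a • EuclideanSpace.single (0 : Fin (n + 2)) (1 : ℝ) + WithLp.toLp 2 z‖ =
        Real.sqrt ((a + z 0) ^ 2 + s) := by
      rw [EuclideanSpace.norm_eq, ← Finset.add_sum_erase _ _ (Finset.mem_univ (0 : Fin (n + 2)))]
      congr 1
      congr 1
      · simp
      · refine Finset.sum_congr rfl fun l hl => ?_
        have : l ≠ 0 := Finset.ne_of_mem_erase hl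
        simp [this]
    rw [hnorm]
    have hsq : Real.sqrt (1 + ((a + z 0) / Real.sqrt s) ^ 2) =
        Real.sqrt ((a + z 0) ^ 2 + s) / Real.sqrt s := by
      rw [← Real.sqrt_div (by positivity), div_pow, Real.sq_sqrt h0.le]
      congr 1
      field_simp; ring
    have hpos : 0 < Real.sqrt ((a + z 0) ^ 2 + s) := Real.sqrt_pos.2 (by positivity)
    have hspos : 0 < Real.sqrt s := Real.sqrt_pos.2 h0
    rw [hsq, div_div_div_cancel_right₀ hspos.ne', div_le_iff₀ hpos] at h2
    simpa using h2
  · have hPhi : Phi (n + 2) γ z = 0 := by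
      unfold Phi; rw [if_neg h0]
    rw [hPhi] at hz
    simp [g] at hz
    linarith

lemma aux_hop (N M : ℕ) (enc : Fin M → Fin N → ℝ) (dec : (Fin N → ℝ) → Fin M)
    (hdec : Measurable dec) (σ : ℝ) (hσ : 0 < σ) (j k : Fin M) :
    hopMatrix enc dec ⟨σ ^ 2, sq_nonneg _⟩ j k =
      (∫⁻ y in {y : EuclideanSpace ℝ (Fin N) | dec (fun t => σ * y t) = k},
        gW N (y - WithLp.toLp 2 (fun t => enc j t / σ))).toReal := by
  have hm : Measurable fun y : EuclideanSpace ℝ (Fin N) => dec (fun t => σ * y t) :=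
    hdec.comp (by fun_prop)
  have hms : MeasurableSet {y : EuclideanSpace ℝ (Fin N) | dec (fun t => σ * y t) = k} :=
    hm (measurableSet_singleton k)
  rw [← aux_gauss_apply N _ _ hms]
  unfold hopMatrix
  have hmap : (Measure.pi fun _ : Fin N => gaussianReal 0 ⟨σ ^ 2, sq_nonneg _⟩) =
      (Measure.pi fun _ : Fin N => gaussianReal 0 1).map (fun z t => σ * z t) := by
    rw [Measure.pi_map_pi (f := fun _ (x : ℝ) => σ * x) (fun i => by fun_prop)]
    congr 1
    ext1 i
    rw [gaussianReal_map_const_mul]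
    simp
    rfl
  rw [hmap, Measure.map_apply (by fun_prop)]
  · congr 2
    ext z
    simp only [Set.mem_preimage, Set.mem_ofPred_eq]
    have : (fun t => enc j t + σ * z t) = fun t => σ *
        (WithLp.toLp 2 (fun t => enc j t / σ) + WithLp.toLp 2 z : EuclideanSpace ℝ (Fin N)) t := by
      ext t
      simp; field_simp
    rw [this]
  · have : Measurable fun z : Fin N → ℝ => dec (fun t => enc j t + z t) := hdec.comp (by fun_prop)
    exact this (measurableSet_singleton k)

lemma aux_hop_stoch (N M : ℕ) (enc : Fin M → Fin N → ℝ) (dec : (Fin N → ℝ) → Fin M)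
    (hdec : Measurable dec) (v : NNReal) : IsStoch (hopMatrix enc dec v) := by
  refine ⟨fun j k => ENNReal.toReal_nonneg, fun j => ?_⟩
  unfold hopMatrix
  have hm : Measurable fun z : Fin N → ℝ => dec (fun t => enc j t + z t) := hdec.comp (by fun_prop)
  rw [← ENNReal.toReal_sum (fun k _ => measure_ne_top _ _)]
  have := sum_measure_preimage_singleton (μ := Measure.pi fun _ : Fin N => gaussianReal 0 v)
    (Finset.univ : Finset (Fin M)) (f := fun z : Fin N → ℝ => dec (fun t => enc j t + z t))
    (fun k _ => hm (measurableSet_singleton k))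
  have h2 : ∑ k, (Measure.pi fun _ : Fin N => gaussianReal 0 v)
      {z | dec (fun t => enc j t + z t) = k} = 1 := by
    refine Eq.trans ?_ (this.trans ?_)
    · rfl
    · simp
  rw [h2]; simp

lemma aux_doeblin (N M : ℕ) [NeZero N] (hM2 : 2 ≤ M)
    (P0 : ℝ) (hP0 : 0 < P0) (σ0 : ℝ) (hσ0 : 0 < σ0) (σ : ℝ) (hσ : σ0 ≤ σ)
    (enc : Fin M → Fin N → ℝ) (hpow : ∀ j, ∑ t, enc j t ^ 2 ≤ N * P0)
    (dec : (Fin N → ℝ) → Fin M) (hdec : Measurable dec) (f : Fin M → Fin M) :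
    M * Qfun (((M : ℝ) - 1) / M *
            (2 * Real.pi ^ ((N : ℝ) / 2) / Real.Gamma ((N : ℝ) / 2))) N (P0 / σ0 ^ 2) ≤
      ∑ k, hopMatrix enc dec ⟨σ ^ 2, sq_nonneg _⟩ (f k) k := by
  have hM' : (2 : ℝ) ≤ M := by exact_mod_cast hM2
  have hNpos : (0 : ℝ) < N := by exact_mod_cast Nat.pos_of_ne_zero (NeZero.ne N)
  have hX : 0 < ((M : ℝ) - 1) / M *
            (2 * Real.pi ^ ((N : ℝ) / 2) / Real.Gamma ((N : ℝ) / 2)) := by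
    have := Real.Gamma_pos_of_pos (by positivity : 0 < (N : ℝ) / 2)
    have : 0 < (M : ℝ) - 1 := by linarith
    have := Real.pi_pos
    positivity
  have hσpos : 0 < σ := hσ0.trans_le hσ
  rcases N with _ | _ | n
  · exact absurd rfl (NeZero.ne 0)
  · have hQ : Qfun (((M : ℝ) - 1) / M * (2 * Real.pi ^ (((0 + 1 : ℕ) : ℝ) / 2) /
        Real.Gamma (((0 + 1 : ℕ) : ℝ) / 2))) (0 + 1) (P0 / σ0 ^ 2) = 0 := by
      unfold Qfun
      have : {z : Fin (0 + 1) → ℝ | ((M : ℝ) - 1) / M * (2 * Real.pi ^ (((0 + 1 : ℕ) : ℝ) / 2) /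
        Real.Gamma (((0 + 1 : ℕ) : ℝ) / 2)) ≤ g (0 + 1) (Phi (0 + 1) (P0 / σ0 ^ 2) z)} = ∅ := by
        ext z
        simp only [Set.mem_ofPred_eq, Set.mem_empty_iff_false, iff_false, not_le]
        have : g (0 + 1) (Phi (0 + 1) (P0 / σ0 ^ 2) z) = 0 := by simp [g]
        rw [this]; exact hX
      rw [this]; simp
    rw [hQ, mul_zero]
    exact Finset.sum_nonneg fun k _ => ENNReal.toReal_nonneg
  · obtain ⟨φ, hφ, hmin, hfr⟩ := aux_phi0 n M hM2
    have hQ := aux_Q_le n M (P0 / σ0 ^ 2) φ hφ _ hX hmin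
    set a := Real.sqrt ((n + 2 : ℕ) * (P0 / σ0 ^ 2)) with ha
    have hm : Measurable fun y : EuclideanSpace ℝ (Fin (n + 2)) => dec (fun t => σ * y t) :=
      hdec.comp (by fun_prop)
    have hx : ∀ k, ‖(WithLp.toLp 2 (fun t => enc (f k) t / σ) : EuclideanSpace ℝ (Fin (n + 2)))‖
        ≤ a := by
      intro k
      rw [EuclideanSpace.norm_eq]
      refine Real.sqrt_le_sqrt ?_
      simp only [Real.norm_eq_abs, sq_abs, div_pow]
      rw [← Finset.sum_div, ← mul_div_assoc]
      have := hpow (f k)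
      gcongr
    have hgeo := aux_geom n M φ hφ hfr a (Real.sqrt_nonneg _)
      (fun k => WithLp.toLp 2 (fun t => enc (f k) t / σ)) hx _ hm
    simp_rw [aux_hop _ M enc dec hdec σ hσpos]
    have hfin : ∀ (D : Set (EuclideanSpace ℝ (Fin (n + 2)))) x, 
        ∫⁻ y in D, gW (n + 2) (y - x) ≠ ⊤ := by
      intro D x
      refine ((setLIntegral_le_lintegral _ _).trans_lt ?_).ne
      rw [lintegral_sub_right_eq_self (gW (n + 2)), gW_total]
      exact ENNReal.one_lt_top
    rw [← ENNReal.toReal_sum (fun k _ => hfin _ _)]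
    refine le_trans (mul_le_mul_of_nonneg_left hQ (by positivity)) ?_
    rw [← ENNReal.toReal_natCast, ← ENNReal.toReal_mul]
    exact ENNReal.toReal_mono (ENNReal.sum_ne_top.2 fun k _ => hfin _ _) hgeo
theorem stmt_18 (N n M : ℕ) [NeZero N] [NeZero M] (R : ℝ) (hR : 0 < R)
    (hM : (M : ℝ) = 2 ^ ((N : ℝ) * R))
    (P0 : ℝ) (hP0 : 0 < P0) (σ0 : ℝ) (hσ0 : 0 < σ0)
    (σ : Fin n → ℝ) (hσ : ∀ i, σ0 ≤ σ i)
    (enc : Fin n → Fin M → Fin N → ℝ)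
    (hpow : ∀ i j, ∑ t, enc i j t ^ 2 ≤ N * P0)
    (dec : Fin n → (Fin N → ℝ) → Fin M)
    (hdec : ∀ i, Measurable (dec i))
    (p : Fin M → ℝ) (hp0 : ∀ j, 0 ≤ p j) (hp1 : ∑ j, p j = 1) :
    mutualInfo p
        (List.ofFn fun i : Fin n =>
          hopMatrix (enc i) (dec i) ⟨σ i ^ 2, sq_nonneg _⟩).prod ≤
      N * R *
        (1 - M * Qfun (((M : ℝ) - 1) / M *
            (2 * Real.pi ^ ((N : ℝ) / 2) / Real.Gamma ((N : ℝ) / 2))) N (P0 / σ0 ^ 2)) ^ n := by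

  have hNpos : (0 : ℝ) < N := by exact_mod_cast Nat.pos_of_ne_zero (NeZero.ne N)
  have hNR : 0 < (N : ℝ) * R := by positivity
  have hM1 : (1 : ℝ) < M := by
    rw [hM]; exact Real.one_lt_rpow (by norm_num) hNR
  have hM2 : 2 ≤ M := by
    have : 1 < M := by exact_mod_cast hM1
    omega
  have hlog : Real.log M ≤ N * R := by
    rw [hM, Real.log_rpow (by norm_num)]
    have : Real.log 2 ≤ 1 := by linarith [Real.log_two_lt_d9]
    nlinarith
  set δ := M * Qfun (((M : ℝ) - 1) / M *
            (2 * Real.pi ^ ((N : ℝ) / 2) / Real.Gamma ((N : ℝ) / 2))) N (P0 / σ0 ^ 2) with hδ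
  have hall : ∀ i : Fin n, IsStoch (hopMatrix (enc i) (dec i) ⟨σ i ^ 2, sq_nonneg _⟩) ∧
      ∀ f : Fin M → Fin M, δ ≤
        ∑ k, hopMatrix (enc i) (dec i) ⟨σ i ^ 2, sq_nonneg _⟩ (f k) k := fun i =>
    ⟨aux_hop_stoch _ _ _ _ (hdec i) _,
      aux_doeblin N M hM2 P0 hP0 σ0 hσ0 (σ i) (hσ i) (enc i) (hpow i) (dec i) (hdec i)⟩
  have hchain := (aux_chain p hp0 hp1 δ (List.ofFn fun i : Fin n =>
          hopMatrix (enc i) (dec i) ⟨σ i ^ 2, sq_nonneg _⟩) (by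
    intro A hA
    rw [List.mem_ofFn] at hA
    obtain ⟨i, rfl⟩ := hA
    exact hall i)).2
  rw [List.length_ofFn] at hchain
  refine hchain.trans ?_
  rw [mul_comm]
  refine mul_le_mul_of_nonneg_right hlog ?_
  rcases Nat.eq_zero_or_pos n with h | h
  · simp [h]
  · refine pow_nonneg ?_ n
    have h1 := (hall ⟨0, h⟩).2 (fun _ => 0)
    rw [(hall ⟨0, h⟩).1.2] at h1
    linarith
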